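/- Let E = (E_1, …, E_d) be a POVM on ℂ^m, let |φ⟩ be a unit vector in ℂ^m, and let λ ∈ (1,2]. Then Σ_{j=1}^d ⟨φ|E_j|φ⟩^{1/λ} ≥ Σ_{j=1}^d ⟨φ|E_j^{1/λ}|φ⟩; equivalently, C_{T,λ}(φ,E) ≥ (1/(λ−1)) ( Σ_{j=1}^d Tr[E_j^{1/(2λ)} |φ⟩⟨φ| E_j^{1/(2λ)}] − 1 ). -/

import Mathlib

/-!
In an eigenbasis `v₁, …, v_m` of a Hermitian matrix `X` with eigenvalues `t₁, …, t_m`, every function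
of `X` has expectation `⟨φ|f(X)|φ⟩ = ∑ᵢ |⟨vᵢ|φ⟩|² f(tᵢ)`, and for a unit vector `φ` the weights
`|⟨vᵢ|φ⟩|²` sum to one (`qexp_cfc`, `sum_specWeight`). Jensen's inequality for the concave function
`t ↦ t ^ s`, `0 ≤ s ≤ 1`, therefore gives `⟨φ|X^s|φ⟩ ≤ ⟨φ|X|φ⟩^s` for positive semidefinite `X`
(`qexp_matRPow_le`), and the first inequality is the sum of this over the effects `E_j` at
`s = 1 / l`. The second is the same inequality, because cyclicity of the trace turns
`Tr[X^s |φ⟩⟨φ| X^s]` into `⟨φ|X^(2s)|φ⟩` (`trace_matRPow_outer`).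
-/


open Matrix BigOperators Finset
open scoped ComplexOrder Classical

noncomputable section

/-- The positive semidefinite square root of a matrix (zero if not PSD). -/
def matSqrt {m : ℕ} (X : Matrix (Fin m) (Fin m) ℂ) : Matrix (Fin m) (Fin m) ℂ :=
  if h : X.PosSemidef then h.1.cfc Real.sqrt else 0

/-- Fractional power of a Hermitian matrix, applying `t ↦ t ^ s` to eigenvalues. -/
def matRPow {m : ℕ} (X : Matrix (Fin m) (Fin m) ℂ) (s : ℝ) : Matrix (Fin m) (Fin m) ℂ :=
  if h : X.IsHermitian then h.cfc (fun t => t ^ s) else 0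

/-- Von Neumann entropy `S(X) = -∑ λᵢ log λᵢ` of a Hermitian matrix. -/
def vnEntropy {m : ℕ} (X : Matrix (Fin m) (Fin m) ℂ) : ℝ :=
  if h : X.IsHermitian then -∑ i, (h.eigenvalues i) * Real.log (h.eigenvalues i) else 0

/-- The rank-one matrix `|φ⟩⟨ψ|`. -/
def outer {m : ℕ} (φ ψ : EuclideanSpace ℂ (Fin m)) : Matrix (Fin m) (Fin m) ℂ :=
  Matrix.of fun i j => φ i * (starRingEnd ℂ) (ψ j)

/-- Trace norm `‖X‖_tr = Tr √(X†X)`. -/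
def traceNorm {m : ℕ} (X : Matrix (Fin m) (Fin m) ℂ) : ℝ :=
  (matSqrt (Xᴴ * X)).trace.re

/-- Binary entropy. -/
def binEnt (x : ℝ) : ℝ := -(x * Real.log x) - (1 - x) * Real.log (1 - x)

/-- A POVM: finitely many PSD matrices summing to the identity. -/
def IsPOVM {m d : ℕ} (E : Fin d → Matrix (Fin m) (Fin m) ℂ) : Prop :=
  (∀ j, (E j).PosSemidef) ∧ ∑ j, E j = 1

/-- Relative entropy POVM-based coherence of a pure state. -/
def Cr {m d : ℕ} (φ : EuclideanSpace ℂ (Fin m)) (E : Fin d → Matrix (Fin m) (Fin m) ℂ) : ℝ :=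
  ∑ j, vnEntropy (matSqrt (E j) * outer φ φ * matSqrt (E j))

/-- `l₁`-norm POVM-based coherence of a pair of pure states. -/
def Cl1 {m d : ℕ} (φ ψ : EuclideanSpace ℂ (Fin m))
    (E : Fin d → Matrix (Fin m) (Fin m) ℂ) : ℝ :=
  ∑ i, ∑ j, if i = j then 0 else traceNorm (matSqrt (E i) * outer φ ψ * matSqrt (E j))

/-- Expectation value `⟨φ|X|φ⟩`. -/
def qexp {m : ℕ} (X : Matrix (Fin m) (Fin m) ℂ) (φ : EuclideanSpace ℂ (Fin m)) : ℂ :=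
  (fun i => (starRingEnd ℂ) (φ i)) ⬝ᵥ X.mulVec (fun i => φ i)

/-- Tsallis relative entropy POVM-based coherence of a density matrix. -/
def CT {m d : ℕ} (ρ : Matrix (Fin m) (Fin m) ℂ) (E : Fin d → Matrix (Fin m) (Fin m) ℂ)
    (l : ℝ) : ℝ :=
  (1 / (l - 1)) *
    ((∑ j, (matRPow (matSqrt (E j) * matRPow ρ l * matSqrt (E j)) (1 / l)).trace.re) - 1)

/-- Tsallis relative entropy POVM-based coherence of a pure state:
`(1/(λ-1)) (∑ⱼ ⟨φ|Eⱼ|φ⟩^{1/λ} - 1)`. -/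
def CTpure {m d : ℕ} (φ : EuclideanSpace ℂ (Fin m))
    (E : Fin d → Matrix (Fin m) (Fin m) ℂ) (l : ℝ) : ℝ :=
  (1 / (l - 1)) * ((∑ j, (qexp (E j) φ).re ^ (1 / l)) - 1)

/-- The λ-logarithm `ln_λ(x) = (x^{1-λ} - 1)/(1-λ)`. -/
def lnl (l x : ℝ) : ℝ := (x ^ (1 - l) - 1) / (1 - l)

/-- The weight `|⟨vᵢ|φ⟩|²` of `φ` on the `i`-th vector of the chosen eigenbasis of `X`:
the columns of `eigenvectorUnitary` are the `vᵢ`, so its adjoint sends `φ` to the `⟨vᵢ|φ⟩`. -/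
def specWeight {m : ℕ} {X : Matrix (Fin m) (Fin m) ℂ} (hX : X.IsHermitian)
    (φ : EuclideanSpace ℂ (Fin m)) (i : Fin m) : ℝ :=
  Complex.normSq ((star (hX.eigenvectorUnitary : Matrix (Fin m) (Fin m) ℂ) *ᵥ (fun k => φ k)) i)

lemma qexp_cfc {m : ℕ} {X : Matrix (Fin m) (Fin m) ℂ} (hX : X.IsHermitian)
    (φ : EuclideanSpace ℂ (Fin m)) (f : ℝ → ℝ) :
    (qexp (hX.cfc f) φ).re = ∑ i, specWeight hX φ i * f (hX.eigenvalues i) := by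
  have key : qexp (hX.cfc f) φ
      = ∑ i, ((specWeight hX φ i * f (hX.eigenvalues i) : ℝ) : ℂ) := by
    unfold qexp specWeight Matrix.IsHermitian.cfc
    rw [Unitary.conjStarAlgAut_apply]
    set U : Matrix (Fin m) (Fin m) ℂ := (hX.eigenvectorUnitary : Matrix (Fin m) (Fin m) ℂ)
    have hs : (fun i => (starRingEnd ℂ) (φ i)) ᵥ* U = star (star U *ᵥ (fun k => φ k)) := by
      rw [star_mulVec, star_eq_conjTranspose, conjTranspose_conjTranspose]
      rfl
    rw [← mulVec_mulVec, ← mulVec_mulVec, dotProduct_mulVec, hs]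
    refine Finset.sum_congr rfl fun i _ => ?_
    rw [mulVec_diagonal, Complex.ofReal_mul, ← Complex.mul_conj]
    simp only [Pi.star_apply, Function.comp_apply, RCLike.star_def, Complex.coe_algebraMap]
    ring
  rw [key, ← Complex.ofReal_sum, Complex.ofReal_re]

/-- The total weight is the expectation of `f(X) = 1` for the constant function `f = 1`. -/
lemma sum_specWeight {m : ℕ} {X : Matrix (Fin m) (Fin m) ℂ} (hX : X.IsHermitian)
    (φ : EuclideanSpace ℂ (Fin m)) (hφ : ‖φ‖ = 1) : ∑ i, specWeight hX φ i = 1 := by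
  have h := qexp_cfc hX φ (fun _ => 1)
  have h1 : hX.cfc (fun _ => 1) = 1 := by
    rw [← hX.cfc_eq, cfc_const_one ℝ X hX.isSelfAdjoint]
  have h2 : (qexp 1 φ).re = ‖φ‖ ^ 2 := by
    rw [EuclideanSpace.norm_sq_eq, qexp, one_mulVec, dotProduct, Complex.re_sum]
    refine Finset.sum_congr rfl fun i _ => ?_
    rw [mul_comm, Complex.mul_conj, Complex.ofReal_re, Complex.normSq_eq_norm_sq]
  rw [h1, h2, hφ] at h
  simpa using h.symm

lemma qexp_eq_sum {m : ℕ} {X : Matrix (Fin m) (Fin m) ℂ} (hX : X.IsHermitian)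
    (φ : EuclideanSpace ℂ (Fin m)) :
    (qexp X φ).re = ∑ i, specWeight hX φ i * hX.eigenvalues i := by
  have h := qexp_cfc hX φ id
  rwa [← hX.cfc_eq, cfc_id ℝ X hX.isSelfAdjoint] at h

/-- Jensen's inequality for `t ↦ t ^ s` and the spectral distribution of `X` in the state `φ`. -/
lemma qexp_matRPow_le {m : ℕ} {X : Matrix (Fin m) (Fin m) ℂ} (hX : X.PosSemidef)
    (φ : EuclideanSpace ℂ (Fin m)) (hφ : ‖φ‖ = 1) {s : ℝ} (hs0 : 0 ≤ s) (hs1 : s ≤ 1) :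
    (qexp (matRPow X s) φ).re ≤ (qexp X φ).re ^ s := by
  rw [matRPow, dif_pos hX.1, qexp_cfc, qexp_eq_sum hX.1]
  exact (Real.concaveOn_rpow hs0 hs1).le_map_sum (fun i _ => Complex.normSq_nonneg _)
    (sum_specWeight hX.1 φ hφ) (fun i _ => hX.eigenvalues_nonneg i)

lemma matRPow_mul_self {m : ℕ} {X : Matrix (Fin m) (Fin m) ℂ} (hX : X.PosSemidef) {s : ℝ}
    (hs : 0 < s) : matRPow X s * matRPow X s = matRPow X (2 * s) := by
  simp only [matRPow, dif_pos hX.1, Matrix.IsHermitian.cfc]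
  rw [← map_mul, diagonal_mul_diagonal]
  congr 2
  funext i
  simp only [Function.comp_apply]
  rw [two_mul, Real.rpow_add_of_nonneg (hX.eigenvalues_nonneg i) hs.le hs.le]
  simp

lemma trace_matRPow_outer {m : ℕ} {X : Matrix (Fin m) (Fin m) ℂ} (hX : X.PosSemidef)
    (φ : EuclideanSpace ℂ (Fin m)) {s : ℝ} (hs : 0 < s) :
    (matRPow X s * outer φ φ * matRPow X s).trace = qexp (matRPow X (2 * s)) φ := by
  have ho : outer φ φ = vecMulVec (fun i => φ i) (fun i => (starRingEnd ℂ) (φ i)) := rfl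
  rw [trace_mul_cycle, matRPow_mul_self hX hs, ho, mul_vecMulVec, trace_vecMulVec,
    dotProduct_comm]
  rfl

/-- Araki–Lieb–Thirring-type bound for the Tsallis relative
entropy POVM-based coherence of a pure state, `λ ∈ (1,2]`. -/
theorem stmt11 {m d : ℕ} (E : Fin d → Matrix (Fin m) (Fin m) ℂ) (hE : IsPOVM E)
    (φ : EuclideanSpace ℂ (Fin m)) (hφ : ‖φ‖ = 1)
    (l : ℝ) (hl : l ∈ Set.Ioc (1 : ℝ) 2) :
    (∑ j, (qexp (matRPow (E j) (1 / l)) φ).re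
        ≤ ∑ j, (qexp (E j) φ).re ^ (1 / l))
    ∧ (1 / (l - 1)) *
        ((∑ j, (matRPow (E j) (1 / (2 * l)) * outer φ φ
            * matRPow (E j) (1 / (2 * l))).trace.re) - 1)
      ≤ CTpure φ E l := by
  obtain ⟨hl1, hl2⟩ := hl
  have hl0 : 0 < l := by linarith
  have hsum : ∑ j, (qexp (matRPow (E j) (1 / l)) φ).re ≤ ∑ j, (qexp (E j) φ).re ^ (1 / l) :=
    Finset.sum_le_sum fun j _ => qexp_matRPow_le (hE.1 j) φ hφ (by positivity)
      ((div_le_one hl0).2 hl1.le)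
  refine ⟨hsum, ?_⟩
  have htr : ∀ j, (matRPow (E j) (1 / (2 * l)) * outer φ φ
      * matRPow (E j) (1 / (2 * l))).trace.re = (qexp (matRPow (E j) (1 / l)) φ).re := by
    intro j
    rw [trace_matRPow_outer (hE.1 j) φ (by positivity : 0 < 1 / (2 * l))]
    congr 3
    field_simp
  simp only [htr, CTpure]
  have hpos : 0 ≤ 1 / (l - 1) := one_div_nonneg.2 (by linarith)
  gcongr
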